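/- arXiv:1610.07302 — 2 statements merged into one kernel-verified Lean document; each statement's English description precedes it below -/
import Mathlib

section
/- Let a, b, c, d be positive real numbers with d > max{a, b, c} and a + c = b + d. Then the function f : ℝ → ℝ defined by f(x) = (sinh(a·x)·sinh(c·x))/(sinh(b·x)·sinh(d·x)) for x ≠ 0, extended by continuity at x = 0 (where f(0) = (a·c)/(b·d)), is infinitely divisible. -/
open scoped ComplexOrder

/-- A function `φ : ℝ → ℂ` is positive definite if for every `n`, all real numbers
`x 1, …, x n` and complex numbers `c 1, …, c n`, the sum
`∑ i j, c i * conj (c j) * φ (x i - x j)` is a nonnegative real number. -/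
def IsPosDefFun (φ : ℝ → ℂ) : Prop :=
  ∀ (n : ℕ) (x : Fin n → ℝ) (c : Fin n → ℂ),
    0 ≤ ∑ i, ∑ j, c i * (starRingEnd ℂ) (c j) * φ (x i - x j)

/-- A real-valued function is infinitely divisible if every positive real power of it
is positive definite. -/
def IsInfDivFun (φ : ℝ → ℝ) : Prop :=
  ∀ r : ℝ, 0 < r → IsPosDefFun fun x => ((φ x ^ r : ℝ) : ℂ)

open MeasureTheory Filter Topology

namespace IsPosDefFun

variable {φ ψ : ℝ → ℂ}

lemma map_neg (hφ : IsPosDefFun φ) (t : ℝ) : φ (-t) = starRingEnd ℂ (φ t) := by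
  have h₀ := (Complex.nonneg_iff.mp (hφ 1 ![0] ![1])).2
  have h₁ := (Complex.nonneg_iff.mp (hφ 2 ![t, 0] ![1, 1])).2
  have h₂ := (Complex.nonneg_iff.mp (hφ 2 ![t, 0] ![1, Complex.I])).2
  simp [Fin.sum_univ_two] at h₀ h₁ h₂
  apply Complex.ext <;> simp <;> linarith

lemma posSemidef (hφ : IsPosDefFun φ) {n : ℕ} (x : Fin n → ℝ) :
    (Matrix.of fun i j => φ (x i - x j)).PosSemidef := by
  refine Matrix.PosSemidef.of_dotProduct_mulVec_nonneg ?_ fun v => ?_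
  · ext i j
    simp [← hφ.map_neg]
  · convert hφ n x (star v) using 1
    simp only [dotProduct, Matrix.mulVec, Finset.mul_sum]
    refine Finset.sum_congr rfl fun i _ => Finset.sum_congr rfl fun j _ => ?_
    simp
    ring

lemma of_posSemidef
    (h : ∀ (n : ℕ) (x : Fin n → ℝ), (Matrix.of fun i j => φ (x i - x j)).PosSemidef) :
    IsPosDefFun φ := by
  intro n x c
  convert (h n x).dotProduct_mulVec_nonneg (star c) using 1
  simp only [dotProduct, Matrix.mulVec, Finset.mul_sum]
  refine Finset.sum_congr rfl fun i _ => Finset.sum_congr rfl fun j _ => ?_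
  simp
  ring

lemma mul (hφ : IsPosDefFun φ) (hψ : IsPosDefFun ψ) : IsPosDefFun fun x => φ x * ψ x :=
  of_posSemidef fun _ x => (hφ.posSemidef x).hadamard (hψ.posSemidef x)

lemma add (hφ : IsPosDefFun φ) (hψ : IsPosDefFun ψ) : IsPosDefFun fun x => φ x + ψ x := by
  intro n x c
  simpa only [mul_add, Finset.sum_add_distrib] using add_nonneg (hφ n x c) (hψ n x c)

lemma const {z : ℂ} (hz : 0 ≤ z) : IsPosDefFun fun _ => z := by
  intro n x c
  have h : ∑ i, ∑ j, c i * starRingEnd ℂ (c j) * z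
      = (∑ i, c i) * starRingEnd ℂ (∑ i, c i) * z := by
    rw [map_sum, Finset.sum_mul_sum]
    simp only [Finset.sum_mul]
  rw [h, Complex.mul_conj]
  exact mul_nonneg (by exact_mod_cast Complex.normSq_nonneg _) hz

lemma comp_mul_left (hφ : IsPosDefFun φ) (s : ℝ) : IsPosDefFun fun x => φ (s * x) := by
  intro n x c
  simpa only [mul_sub] using hφ n (fun i => s * x i) c

lemma pow (hφ : IsPosDefFun φ) (k : ℕ) : IsPosDefFun fun x => φ x ^ k := by
  induction k with
  | zero => simpa using const zero_le_one
  | succ k ih => simpa only [pow_succ] using ih.mul hφ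

lemma sum {ι : Type*} (s : Finset ι) {Φ : ι → ℝ → ℂ} (h : ∀ i ∈ s, IsPosDefFun (Φ i)) :
    IsPosDefFun fun x => ∑ i ∈ s, Φ i x := by
  classical
  induction s using Finset.induction_on with
  | empty => simpa using const le_rfl
  | insert i s hi ih =>
    simp only [Finset.sum_insert hi]
    exact (h i (by simp)).add (ih fun j hj => h j (by simp [hj]))

lemma prod {ι : Type*} (s : Finset ι) {Φ : ι → ℝ → ℂ} (h : ∀ i ∈ s, IsPosDefFun (Φ i)) :
    IsPosDefFun fun x => ∏ i ∈ s, Φ i x := by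
  classical
  induction s using Finset.induction_on with
  | empty => simpa using const zero_le_one
  | insert i s hi ih =>
    simp only [Finset.prod_insert hi]
    exact (h i (by simp)).mul (ih fun j hj => h j (by simp [hj]))

lemma of_tendsto {Φ : ℕ → ℝ → ℂ} (hΦ : ∀ k, IsPosDefFun (Φ k))
    (h : ∀ x, Tendsto (fun k => Φ k x) atTop (𝓝 (φ x))) : IsPosDefFun φ := fun n x c =>
  ge_of_tendsto' (tendsto_finsetSum _ fun _ _ => tendsto_finsetSum _ fun _ _ =>
    (h _).const_mul _) fun k => hΦ k n x c

lemma exp (hφ : IsPosDefFun φ) : IsPosDefFun fun x => Complex.exp (φ x) := by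
  refine of_tendsto (Φ := fun k x => ∑ i ∈ Finset.range k, φ x ^ i / (i.factorial : ℂ))
    (fun k => sum _ fun i _ => ?_) fun x => ?_
  · simp only [div_eq_mul_inv]
    refine (hφ.pow i).mul (const ?_)
    rw [← Complex.ofReal_natCast, ← Complex.ofReal_inv]
    exact Complex.zero_le_real.mpr (by positivity)
  · rw [Complex.exp_eq_exp_ℂ]
    exact (NormedSpace.expSeries_div_hasSum_exp (φ x)).tendsto_sum_nat

lemma integral {α : Type*} [MeasurableSpace α] {μ : Measure α} {K : α → ℝ → ℂ}
    (hint : ∀ x, Integrable (fun u => K u x) μ) (h : ∀ᵐ u ∂μ, IsPosDefFun (K u)) :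
    IsPosDefFun fun x => ∫ u, K u x ∂μ := by
  intro n x c
  have e : ∑ i, ∑ j, c i * starRingEnd ℂ (c j) * ∫ u, K u (x i - x j) ∂μ
      = ∫ u, ∑ i, ∑ j, c i * starRingEnd ℂ (c j) * K u (x i - x j) ∂μ := by
    rw [integral_finsetSum _ fun i _ => integrable_finsetSum _ fun j _ => (hint _).const_mul _]
    refine Finset.sum_congr rfl fun i _ => ?_
    rw [integral_finsetSum _ fun j _ => (hint _).const_mul _]
    simp only [integral_const_mul]
  rw [e]
  refine integral_nonneg_of_ae ?_
  filter_upwards [h] with u hu using hu n x c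

lemma integral_interval {a b : ℝ} (hab : a ≤ b) {K : ℝ → ℝ → ℝ}
    (hint : ∀ x, IntervalIntegrable (fun u => K u x) volume a b)
    (h : ∀ u ∈ Set.Ioc a b, IsPosDefFun fun x => (K u x : ℂ)) :
    IsPosDefFun fun x => ((∫ u in a..b, K u x : ℝ) : ℂ) := by
  have e (x : ℝ) : ((∫ u in a..b, K u x : ℝ) : ℂ) = ∫ u in Set.Ioc a b, (K u x : ℂ) := by
    rw [intervalIntegral.integral_of_le hab, integral_complex_ofReal]
  simp only [e]
  refine integral (K := fun u x => (K u x : ℂ)) (fun x => ((intervalIntegrable_iff_integrableOn_Ioc_of_le hab).mp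
    (hint x)).ofReal) ?_
  filter_upwards [ae_restrict_mem measurableSet_Ioc] with u hu using h u hu

lemma exp_mul_I (t : ℝ) : IsPosDefFun fun x => Complex.exp (x * t * Complex.I) := by
  intro n x c
  have h : ∑ i, ∑ j, c i * starRingEnd ℂ (c j) * Complex.exp (((x i - x j : ℝ) : ℂ) * t * Complex.I)
      = (∑ i, c i * Complex.exp (x i * t * Complex.I)) *
        starRingEnd ℂ (∑ i, c i * Complex.exp (x i * t * Complex.I)) := by
    simp only [map_sum, Finset.sum_mul_sum, map_mul, ← Complex.exp_conj, Complex.conj_ofReal,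
      Complex.conj_I]
    refine Finset.sum_congr rfl fun i _ => Finset.sum_congr rfl fun j _ => ?_
    rw [mul_mul_mul_comm, ← Complex.exp_add]
    congr 2
    push_cast
    ring
  rw [h, Complex.mul_conj]
  exact_mod_cast Complex.normSq_nonneg _

lemma inv_one_sub_mul_I : IsPosDefFun fun x => (1 - x * Complex.I)⁻¹ := by
  have hre (x : ℝ) : (-(1 - x * Complex.I)).re < 0 := by simp
  have h : IsPosDefFun fun x => ∫ t in Set.Ioi (0 : ℝ),
      Complex.exp (-(1 - x * Complex.I) * t) := by
    refine integral (fun x => integrableOn_exp_mul_complex_Ioi (hre x) 0) (ae_of_all _ fun t => ?_)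
    have hpos : (0 : ℂ) ≤ (Real.exp (-t) : ℂ) := by exact_mod_cast (Real.exp_pos _).le
    convert (const hpos).mul (exp_mul_I t) using 2 with x
    rw [Complex.ofReal_exp, ← Complex.exp_add]
    congr 1
    push_cast
    ring
  convert h using 2 with x
  rw [integral_exp_mul_complex_Ioi (hre x)]
  rw [Complex.ofReal_zero, mul_zero, Complex.exp_zero, neg_div_neg_eq, one_div]

lemma inv_one_add_sq : IsPosDefFun fun x => (((1 + x ^ 2)⁻¹ : ℝ) : ℂ) := by
  have hhalf : (0 : ℂ) ≤ ((1 / 2 : ℝ) : ℂ) := by exact_mod_cast (by norm_num : (0 : ℝ) ≤ 1 / 2)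
  convert (const hhalf).mul
    (inv_one_sub_mul_I.add (inv_one_sub_mul_I.comp_mul_left (-1))) using 2 with x
  have h₁ : (1 - x * Complex.I : ℂ) ≠ 0 := fun h => by simpa using congrArg Complex.re h
  have h₂ : (1 + x * Complex.I : ℂ) ≠ 0 := fun h => by simpa using congrArg Complex.re h
  have h₃ : (1 + x ^ 2 : ℂ) = (1 - x * Complex.I) * (1 + x * Complex.I) := by
    ring_nf
    simp
  push_cast
  rw [h₃]
  simp only [neg_mul, one_mul, sub_neg_eq_add]
  field_simp
  ring

end IsPosDefFun

lemma Real.tendsto_euler_sinh_prod (x : ℝ) :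
    Tendsto (fun n : ℕ => x * ∏ j ∈ Finset.range n, (1 + (x / (Real.pi * (j + 1))) ^ 2))
      atTop (𝓝 (Real.sinh x)) := by
  have h := (Complex.tendsto_euler_sin_prod (x / Real.pi * Complex.I)).mul_const (-Complex.I)
  have hpi : (Real.pi : ℂ) ≠ 0 := by exact_mod_cast Real.pi_ne_zero
  have hx : (Real.pi : ℂ) * (x / Real.pi * Complex.I) = x * Complex.I := by field_simp
  rw [hx, Complex.sin_mul_I, mul_assoc, mul_neg, Complex.I_mul_I, neg_neg, mul_one] at h
  rw [← Complex.ofReal_sinh] at h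
  refine (Complex.continuous_re.continuousAt.tendsto.comp h).congr fun n => ?_
  rw [Function.comp_apply, ← Complex.ofReal_re
    (x * ∏ j ∈ Finset.range n, (1 + (x / (Real.pi * (j + 1))) ^ 2))]
  congr 1
  push_cast
  rw [mul_right_comm, mul_assoc (x : ℂ), mul_neg, Complex.I_mul_I, neg_neg, mul_one]
  congr 1
  refine Finset.prod_congr rfl fun j _ => ?_
  rw [mul_pow, Complex.I_sq, div_pow, div_pow, mul_pow, ← div_div]
  ring

/-- The function `x ↦ x / sinh (u * x)`, extended by continuity at `0`. -/
noncomputable def divSinh (u x : ℝ) : ℝ := if x = 0 then 1 / u else x / Real.sinh (u * x)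

/-- The function `x ↦ x * coth (u * x)`, with value `1 / u` at `0`. -/
noncomputable def mulCoth (u x : ℝ) : ℝ :=
  if x = 0 then 1 / u else x * Real.cosh (u * x) / Real.sinh (u * x)

/-- The function `x ↦ log |sinh (u * x)|`, with value `log u` at `0`. -/
noncomputable def logSinh (u x : ℝ) : ℝ :=
  if x = 0 then Real.log u else Real.log (Real.sinh (u * x))

lemma sinh_mul_ne_zero {u x : ℝ} (hu : 0 < u) (hx : x ≠ 0) : Real.sinh (u * x) ≠ 0 :=
  Real.sinh_eq_zero.not.mpr (mul_ne_zero hu.ne' hx)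

lemma isPosDefFun_divSinh_one : IsPosDefFun fun x => (divSinh 1 x : ℂ) := by
  refine IsPosDefFun.of_tendsto (Φ := fun n x => ∏ j ∈ Finset.range n,
    (((1 + ((Real.pi * (j + 1))⁻¹ * x) ^ 2)⁻¹ : ℝ) : ℂ))
    (fun n => IsPosDefFun.prod _ fun j _ => IsPosDefFun.inv_one_add_sq.comp_mul_left _)
    fun x => ?_
  simp only [← Complex.ofReal_prod]
  refine (Complex.continuous_ofReal.tendsto _).comp ?_
  rcases eq_or_ne x 0 with rfl | hx
  · simp [divSinh]
  · have h := ((Real.tendsto_euler_sinh_prod x).inv₀ (Real.sinh_eq_zero.not.mpr hx)).const_mul x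
    simp only [divSinh, hx, if_false, one_mul, div_eq_mul_inv]
    refine h.congr fun n => ?_
    rw [mul_inv, mul_inv_cancel_left₀ hx, ← Finset.prod_inv_distrib]
    refine Finset.prod_congr rfl fun j _ => ?_
    rw [div_eq_inv_mul]

lemma isPosDefFun_divSinh_sq {u : ℝ} (hu : 0 < u) :
    IsPosDefFun fun x => ((divSinh u x ^ 2 : ℝ) : ℂ) := by
  have hu' : (0 : ℂ) ≤ ((1 / u : ℝ) : ℂ) := by exact_mod_cast (by positivity : 0 ≤ 1 / u)
  have h := ((IsPosDefFun.const hu').mul (isPosDefFun_divSinh_one.comp_mul_left u)).pow 2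
  convert h using 2 with x
  rw [← Complex.ofReal_mul, ← Complex.ofReal_pow]
  rcases eq_or_ne x 0 with rfl | hx
  · simp [divSinh]
  · have := sinh_mul_ne_zero hu hx
    simp only [divSinh, hx, hu.ne', mul_eq_zero, or_self, if_false, one_mul]
    field_simp

lemma hasDerivAt_mul_const_sinh (u x : ℝ) :
    HasDerivAt (fun v => Real.sinh (v * x)) (x * Real.cosh (u * x)) u := by
  simpa [mul_comm] using (hasDerivAt_mul_const (x := u) x).sinh

lemma hasDerivAt_mul_const_cosh (u x : ℝ) :
    HasDerivAt (fun v => Real.cosh (v * x)) (x * Real.sinh (u * x)) u := by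
  simpa [mul_comm] using (hasDerivAt_mul_const (x := u) x).cosh

lemma hasDerivAt_logSinh {u : ℝ} (hu : 0 < u) (x : ℝ) :
    HasDerivAt (fun v => logSinh v x) (mulCoth u x) u := by
  rcases eq_or_ne x 0 with rfl | hx
  · simpa [logSinh, mulCoth] using Real.hasDerivAt_log hu.ne'
  · simpa [logSinh, mulCoth, hx] using
      (hasDerivAt_mul_const_sinh u x).log (sinh_mul_ne_zero hu hx)

lemma hasDerivAt_mulCoth {u : ℝ} (hu : 0 < u) (x : ℝ) :
    HasDerivAt (fun v => mulCoth v x) (-divSinh u x ^ 2) u := by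
  rcases eq_or_ne x 0 with rfl | hx
  · simpa [divSinh, mulCoth] using hasDerivAt_inv hu.ne'
  · have hs := sinh_mul_ne_zero hu hx
    simp only [divSinh, mulCoth, hx, if_false]
    refine (((hasDerivAt_mul_const_cosh u x).const_mul x).div
      (hasDerivAt_mul_const_sinh u x) hs).congr_deriv ?_
    have hcs := Real.cosh_sq (u * x)
    generalize Real.cosh (u * x) = C at hcs ⊢
    generalize Real.sinh (u * x) = S at hcs hs ⊢
    field_simp
    linear_combination -hcs

lemma continuousAt_divSinh {u : ℝ} (hu : 0 < u) (x : ℝ) :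
    ContinuousAt (fun v => divSinh v x) u := by
  rcases eq_or_ne x 0 with rfl | hx
  · simpa [divSinh] using continuousAt_inv₀ hu.ne'
  · simp only [divSinh, hx, if_false]
    exact continuousAt_const.div₀ (hasDerivAt_mul_const_sinh u x).continuousAt
      (sinh_mul_ne_zero hu hx)

lemma isPosDefFun_mulCoth_sub {u v : ℝ} (hu : 0 < u) (huv : u ≤ v) :
    IsPosDefFun fun x => ((mulCoth u x - mulCoth v x : ℝ) : ℂ) := by
  have hpos : ∀ w ∈ Set.uIcc u v, 0 < w := fun w hw =>
    hu.trans_le (Set.uIcc_of_le huv ▸ hw).1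
  have hint (x : ℝ) : IntervalIntegrable (fun w => divSinh w x ^ 2) volume u v :=
    ContinuousOn.intervalIntegrable fun w hw =>
      ((continuousAt_divSinh (hpos w hw) x).pow 2).continuousWithinAt
  convert IsPosDefFun.integral_interval huv hint
    (fun w hw => isPosDefFun_divSinh_sq (hu.trans hw.1)) using 3 with x
  rw [intervalIntegral.integral_eq_sub_of_hasDerivAt (f := fun w => -mulCoth w x)
    (fun w hw => (hasDerivAt_mulCoth (hpos w hw) x).neg.congr_deriv (neg_neg _)) (hint x)]
  ring

lemma isPosDefFun_logSinh_sub {b a h : ℝ} (hb : 0 < b) (hba : b ≤ a) (hh : 0 ≤ h) :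
    IsPosDefFun fun x =>
      ((logSinh a x - logSinh (a + h) x - (logSinh b x - logSinh (b + h) x) : ℝ) : ℂ) := by
  have hpos : ∀ w ∈ Set.uIcc b a, 0 < w := fun w hw =>
    hb.trans_le (Set.uIcc_of_le hba ▸ hw).1
  have hderiv (x : ℝ) : ∀ w ∈ Set.uIcc b a,
      HasDerivAt (fun w => logSinh w x - logSinh (w + h) x)
        (mulCoth w x - mulCoth (w + h) x) w := fun w hw =>
    (hasDerivAt_logSinh (hpos w hw) x).sub
      ((hasDerivAt_logSinh (add_pos_of_pos_of_nonneg (hpos w hw) hh) x).comp_add_const w h)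
  have hint (x : ℝ) : IntervalIntegrable (fun w => mulCoth w x - mulCoth (w + h) x) volume b a :=
    ContinuousOn.intervalIntegrable fun w hw => ContinuousAt.continuousWithinAt <|
      (hasDerivAt_mulCoth (hpos w hw) x).continuousAt.sub
        ((hasDerivAt_mulCoth (add_pos_of_pos_of_nonneg (hpos w hw) hh) x).comp_add_const
          w h).continuousAt
  convert IsPosDefFun.integral_interval hba hint
    (fun w hw => isPosDefFun_mulCoth_sub (hb.trans hw.1) (le_add_of_nonneg_right hh))
    using 3 with x
  rw [intervalIntegral.integral_eq_sub_of_hasDerivAt (hderiv x) (hint x)]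

lemma IsInfDivFun.of_log {f : ℝ → ℝ} (hpos : ∀ x, 0 < f x)
    (hlog : IsPosDefFun fun x => (Real.log (f x) : ℂ)) : IsInfDivFun f := by
  intro r hr
  have hr' : (0 : ℂ) ≤ (r : ℂ) := by exact_mod_cast hr.le
  convert (hlog.mul (IsPosDefFun.const hr')).exp using 2 with x
  rw [Real.rpow_def_of_pos (hpos x)]
  push_cast
  rfl

theorem sinh_two_factor_infdiv (a b c d : ℝ) (ha : 0 < a) (hb : 0 < b) (hc : 0 < c)
    (hd : 0 < d) (hmax : max (max a b) c < d) (hsum : a + c = b + d)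
    (f : ℝ → ℝ)
    (hf : ∀ x : ℝ, x ≠ 0 →
      f x = Real.sinh (a * x) * Real.sinh (c * x) / (Real.sinh (b * x) * Real.sinh (d * x)))
    (hf0 : f 0 = a * c / (b * d)) :
    IsInfDivFun f := by
  obtain ⟨⟨had, -⟩, hcd⟩ : (a < d ∧ b < d) ∧ c < d := by simpa using hmax
  have hratio (u v : ℝ) (hu : 0 < u) (hv : 0 < v) (x : ℝ) (hx : x ≠ 0) :
      0 < Real.sinh (u * x) / Real.sinh (v * x) := by
    rcases hx.lt_or_gt with hx | hx
    · exact div_pos_of_neg_of_neg (Real.sinh_neg_iff.mpr (mul_neg_of_pos_of_neg hu hx))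
        (Real.sinh_neg_iff.mpr (mul_neg_of_pos_of_neg hv hx))
    · exact div_pos (Real.sinh_pos_iff.mpr (mul_pos hu hx))
        (Real.sinh_pos_iff.mpr (mul_pos hv hx))
  refine IsInfDivFun.of_log (fun x => ?_) ?_
  · rcases eq_or_ne x 0 with rfl | hx
    · rw [hf0]
      positivity
    · rw [hf x hx, mul_div_mul_comm]
      exact mul_pos (hratio a b ha hb x hx) (hratio c d hc hd x hx)
  · convert isPosDefFun_logSinh_sub hb (by linarith : b ≤ a) (by linarith : 0 ≤ c - b)
      using 3 with x
    rw [show a + (c - b) = d by linarith, add_sub_cancel]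
    rcases eq_or_ne x 0 with rfl | hx
    · simp only [logSinh, if_true, hf0]
      rw [Real.log_div (by positivity) (by positivity), Real.log_mul ha.ne' hc.ne',
        Real.log_mul hb.ne' hd.ne']
      ring
    · have ha' := sinh_mul_ne_zero ha hx
      have hb' := sinh_mul_ne_zero hb hx
      have hc' := sinh_mul_ne_zero hc hx
      have hd' := sinh_mul_ne_zero hd hx
      simp only [logSinh, hx, if_false, hf x hx]
      rw [Real.log_div (mul_ne_zero ha' hc') (mul_ne_zero hb' hd'), Real.log_mul ha' hc',
        Real.log_mul hb' hd']
      ring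
end

section
/- The function f : ℝ → ℝ defined by f(x) = (sinh(8x)·sinh(6x)·sinh(x))/(sinh(9x)·sinh(4x)·sinh(4x)) for x ≠ 0 and f(0) = 1/3 (its continuous extension) is infinitely divisible. -/
open scoped ComplexOrder

open Filter Topology MeasureTheory Set

section PositiveDefinite

/-- An even function `φ : ℝ → ℝ` all of whose quadratic forms
`∑ i j, a i * a j * φ (x i - x j)` are nonnegative. -/
structure IsRealPosDef (φ : ℝ → ℝ) : Prop where
  even : ∀ x, φ (-x) = φ x
  nonneg : ∀ (n : ℕ) (x a : Fin n → ℝ), 0 ≤ ∑ i, ∑ j, a i * a j * φ (x i - x j)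

namespace IsRealPosDef

variable {φ ψ : ℝ → ℝ}

theorem isPosDefFun (h : IsRealPosDef φ) : IsPosDefFun fun x => (φ x : ℂ) := by
  intro n x c
  have hsymm : ∑ i, ∑ j, (c i).re * (c j).im * φ (x i - x j) =
      ∑ i, ∑ j, (c i).im * (c j).re * φ (x i - x j) := by
    rw [Finset.sum_comm]
    refine Finset.sum_congr rfl fun i _ => Finset.sum_congr rfl fun j _ => ?_
    rw [← h.even, neg_sub]
    ring
  rw [Complex.le_def]
  constructor
  · have := add_nonneg (h.nonneg n x fun i => (c i).re) (h.nonneg n x fun i => (c i).im)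
    simpa [Complex.re_sum, ← Finset.sum_add_distrib, add_mul] using this
  · rw [← sub_eq_zero] at hsymm
    simp only [Complex.zero_im, Complex.im_sum, Complex.mul_im, Complex.mul_re, Complex.conj_re,
      Complex.conj_im, Complex.ofReal_re, Complex.ofReal_im]
    refine (neg_eq_zero.1 (Eq.trans ?_ hsymm)).symm
    rw [← Finset.sum_neg_distrib, ← Finset.sum_sub_distrib]
    refine Finset.sum_congr rfl fun i _ => ?_
    rw [← Finset.sum_neg_distrib, ← Finset.sum_sub_distrib]
    exact Finset.sum_congr rfl fun j _ => by ring

theorem of_tendsto {ι : Type*} {l : Filter ι} [l.NeBot] {Φ : ι → ℝ → ℝ}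
    (h : ∀ k, IsRealPosDef (Φ k)) (hlim : ∀ x, Tendsto (fun k => Φ k x) l (𝓝 (φ x))) :
    IsRealPosDef φ where
  even x := tendsto_nhds_unique ((hlim (-x)).congr fun k => (h k).even x) (hlim x)
  nonneg n x a := ge_of_tendsto'
    (tendsto_finsetSum _ fun i _ => tendsto_finsetSum _ fun j _ =>
      (hlim (x i - x j)).const_mul (a i * a j)) fun k => (h k).nonneg n x a

theorem const {C : ℝ} (hC : 0 ≤ C) : IsRealPosDef fun _ => C where
  even _ := rfl
  nonneg n x a := by
    simp_rw [← Finset.sum_mul, ← Finset.mul_sum, ← Finset.sum_mul]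
    exact mul_nonneg (mul_self_nonneg _) hC

theorem add (hφ : IsRealPosDef φ) (hψ : IsRealPosDef ψ) :
    IsRealPosDef fun x => φ x + ψ x where
  even x := by rw [hφ.even, hψ.even]
  nonneg n x a := by
    simpa [mul_add, Finset.sum_add_distrib] using add_nonneg (hφ.nonneg n x a) (hψ.nonneg n x a)

theorem posSemidef (h : IsRealPosDef φ) {n : ℕ} (x : Fin n → ℝ) :
    (Matrix.of fun i j => φ (x i - x j)).PosSemidef := by
  refine .of_dotProduct_mulVec_nonneg ?_ fun a => ?_
  · ext i j
    simp [← h.even (x i - x j)]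
  · convert! h.nonneg n x a using 1
    simp only [dotProduct, Matrix.mulVec, Finset.mul_sum, Matrix.of_apply, star_trivial]
    exact Finset.sum_congr rfl fun i _ => Finset.sum_congr rfl fun j _ => by ring

theorem mul (hφ : IsRealPosDef φ) (hψ : IsRealPosDef ψ) :
    IsRealPosDef fun x => φ x * ψ x where
  even x := by rw [hφ.even, hψ.even]
  nonneg n x a := by
    have := ((hφ.posSemidef x).hadamard (hψ.posSemidef x)).dotProduct_mulVec_nonneg a
    convert! this using 1
    simp only [dotProduct, Matrix.mulVec, Finset.mul_sum, Matrix.of_apply, star_trivial,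
      Matrix.hadamard_apply]
    exact Finset.sum_congr rfl fun i _ => Finset.sum_congr rfl fun j _ => by ring

theorem pow (h : IsRealPosDef φ) (k : ℕ) : IsRealPosDef fun x => φ x ^ k := by
  induction k with
  | zero => simpa using const zero_le_one
  | succ k ih => simpa only [pow_succ] using ih.mul h

theorem sum {ι : Type*} {Φ : ι → ℝ → ℝ} (s : Finset ι) (h : ∀ k, IsRealPosDef (Φ k)) :
    IsRealPosDef fun x => ∑ k ∈ s, Φ k x := by
  classical
  induction s using Finset.induction_on with
  | empty => simpa using const le_rfl
  | insert k s hk ih => simpa only [Finset.sum_insert hk] using (h k).add ih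

theorem exp (h : IsRealPosDef φ) : IsRealPosDef fun x => Real.exp (φ x) := by
  refine of_tendsto (l := atTop) (Φ := fun (n : ℕ) x => ∑ k ∈ Finset.range n,
    φ x ^ k * (k.factorial : ℝ)⁻¹) (fun n => ?_) fun x => ?_
  · exact sum _ fun k => (h.pow k).mul (const (by positivity))
  · rw [Real.exp_eq_exp_ℝ]
    simpa only [div_eq_mul_inv] using (NormedSpace.expSeries_div_hasSum_exp (φ x)).tendsto_sum_nat

theorem integral_cos {w : ℝ → ℝ} {s : Set ℝ} (hs : MeasurableSet s) (hw : ∀ t ∈ s, 0 ≤ w t)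
    (hint : IntegrableOn w s) : IsRealPosDef fun x => ∫ t in s, Real.cos (x * t) * w t where
  even x := by simp
  nonneg n x a := by
    have hcos (y : ℝ) : IntegrableOn (fun t => Real.cos (y * t) * w t) s :=
      Integrable.bdd_mul (c := 1) hint (by fun_prop) (ae_of_all _ fun t => Real.abs_cos_le_one _)
    simp_rw [← integral_const_mul]
    have hsum : ∑ i, ∑ j, ∫ t in s, a i * a j * (Real.cos ((x i - x j) * t) * w t) =
        ∫ t in s, ∑ i, ∑ j, a i * a j * (Real.cos ((x i - x j) * t) * w t) := by
      rw [integral_finsetSum _ fun i _ => integrable_finsetSum _ fun j _ => (hcos _).const_mul _]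
      refine Finset.sum_congr rfl fun i _ => ?_
      rw [integral_finsetSum _ fun j _ => (hcos _).const_mul _]
    rw [hsum]
    refine setIntegral_nonneg hs fun t ht => ?_
    have : ∑ i, ∑ j, a i * a j * (Real.cos ((x i - x j) * t) * w t) =
        ((∑ i, a i * Real.cos (x i * t)) * (∑ i, a i * Real.cos (x i * t)) +
          (∑ i, a i * Real.sin (x i * t)) * (∑ i, a i * Real.sin (x i * t))) * w t := by
      rw [Finset.sum_mul_sum, Finset.sum_mul_sum, ← Finset.sum_add_distrib, Finset.sum_mul]
      refine Finset.sum_congr rfl fun i _ => ?_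
      rw [← Finset.sum_add_distrib, Finset.sum_mul]
      refine Finset.sum_congr rfl fun j _ => ?_
      rw [sub_mul, Real.cos_sub]
      ring
    rw [this]
    exact mul_nonneg (add_nonneg (mul_self_nonneg _) (mul_self_nonneg _)) (hw t ht)

end IsRealPosDef

end PositiveDefinite

section LevyIntegral

theorem abs_one_sub_cos_div_le (x t : ℝ) : |(1 - Real.cos (x * t)) / t| ≤ |x| := by
  rcases eq_or_ne t 0 with rfl | ht
  · simp
  · rw [abs_div, div_le_iff₀ (abs_pos.2 ht), ← abs_mul]
    simpa using Real.abs_cos_sub_cos_le 0 (x * t)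

theorem integrableOn_one_sub_cos_div_mul {w : ℝ → ℝ} {s : Set ℝ} (hw : IntegrableOn w s)
    (x : ℝ) : IntegrableOn (fun t => (1 - Real.cos (x * t)) / t * w t) s :=
  Integrable.bdd_mul (c := |x|) hw
    (Measurable.aestronglyMeasurable (by fun_prop))
    (ae_of_all _ fun t => abs_one_sub_cos_div_le x t)

theorem isRealPosDef_exp_neg_integral {w : ℝ → ℝ} (hw : ∀ t ∈ Ioi (0 : ℝ), 0 ≤ w t)
    (hint : IntegrableOn w (Ioi 0)) :
    IsRealPosDef fun x => Real.exp (-∫ t in Ioi (0 : ℝ), (1 - Real.cos (x * t)) / t * w t) := by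
  refine .of_tendsto (l := atTop) (Φ := fun (n : ℕ) x =>
    Real.exp (-∫ t in Ioi (0 : ℝ), (1 - Real.cos (x * t)) / (t + 1 / ((n : ℝ) + 1)) * w t))
    (fun n => ?_) fun x => ?_
  · have hε : 0 < 1 / ((n : ℝ) + 1) := Nat.one_div_pos_of_nat
    set ε := 1 / ((n : ℝ) + 1)
    have hv : IntegrableOn (fun t => (t + ε)⁻¹ * w t) (Ioi 0) := by
      refine Integrable.bdd_mul (c := ε⁻¹) hint (Measurable.aestronglyMeasurable (by fun_prop)) ?_
      filter_upwards [ae_restrict_mem measurableSet_Ioi] with t ht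
      rw [mem_Ioi] at ht
      rw [Real.norm_of_nonneg (by positivity)]
      exact inv_anti₀ hε (by linarith)
    have hv0 : ∀ t ∈ Ioi (0 : ℝ), 0 ≤ (t + ε)⁻¹ * w t := fun t ht =>
      mul_nonneg (inv_nonneg.2 (add_pos ht hε).le) (hw t ht)
    have key := (IsRealPosDef.integral_cos measurableSet_Ioi hv0 hv).exp.mul
      (.const (Real.exp_pos (-∫ t in Ioi (0 : ℝ), (t + ε)⁻¹ * w t)).le)
    convert! key using 2 with x
    have hc : IntegrableOn (fun t => Real.cos (x * t) * ((t + ε)⁻¹ * w t)) (Ioi 0) :=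
      Integrable.bdd_mul (c := 1) hv (by fun_prop) (ae_of_all _ fun t => Real.abs_cos_le_one _)
    rw [← Real.exp_add, ← sub_eq_add_neg, ← integral_sub hc hv, ← integral_neg]
    congr 2
    ext t
    ring
  · refine (Real.continuous_exp.tendsto _).comp (Tendsto.neg ?_)
    refine tendsto_integral_of_dominated_convergence (fun t => |x| * |w t|) (fun n => ?_)
      (hint.abs.const_mul _) (fun n => ?_) ?_
    · exact (Measurable.aestronglyMeasurable (by fun_prop)).mul hint.aestronglyMeasurable
    · filter_upwards [ae_restrict_mem measurableSet_Ioi] with t ht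
      rw [mem_Ioi] at ht
      rw [norm_mul, Real.norm_eq_abs, Real.norm_eq_abs]
      refine mul_le_mul_of_nonneg_right ?_ (abs_nonneg _)
      refine le_trans ?_ (abs_one_sub_cos_div_le x t)
      rw [abs_div, abs_div]
      have hε : 0 < 1 / ((n : ℝ) + 1) := Nat.one_div_pos_of_nat
      rw [abs_of_pos ht, abs_of_pos (add_pos ht hε)]
      gcongr
      linarith
    · filter_upwards [ae_restrict_mem measurableSet_Ioi] with t ht
      have h := (tendsto_one_div_add_atTop_nhds_zero_nat (𝕜 := ℝ)).const_add t
      rw [add_zero] at h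
      exact (tendsto_const_nhds.div h (ne_of_gt ht)).mul_const _

end LevyIntegral

section Frullani

variable {c : ℝ}

theorem integrableOn_exp_neg_mul (hc : 0 < c) :
    IntegrableOn (fun t => Real.exp (-c * t)) (Ioi 0) :=
  integrableOn_exp_mul_Ioi (neg_neg_iff_pos.2 hc) 0

theorem integral_sin_mul_exp_neg (hc : 0 < c) (x : ℝ) :
    ∫ t in Ioi (0 : ℝ), Real.sin (x * t) * Real.exp (-c * t) = x / (c ^ 2 + x ^ 2) := by
  have hre : ((-c : ℂ) + x * Complex.I).re < 0 := by simpa using hc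
  have hint := integrableOn_exp_mul_complex_Ioi hre 0
  have h := integral_exp_mul_complex_Ioi hre 0
  have him := integral_im hint
  have hfun (t : ℝ) : RCLike.im (Complex.exp (((-c : ℂ) + x * Complex.I) * t)) =
      Real.sin (x * t) * Real.exp (-c * t) := by
    simp [Complex.exp_im, mul_comm]
  simp only [hfun] at him
  rw [him, h]
  have : c ^ 2 + x ^ 2 ≠ 0 := by positivity
  simp [Complex.div_im, Complex.normSq_apply]
  field_simp

theorem integral_one_sub_cos_div_mul_exp_neg (hc : 0 < c) (x : ℝ) :
    ∫ t in Ioi (0 : ℝ), (1 - Real.cos (x * t)) / t * Real.exp (-c * t) =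
      Real.log (1 + x ^ 2 / c ^ 2) / 2 := by
  have hF (x : ℝ) : HasDerivAt
      (fun x => ∫ t in Ioi (0 : ℝ), (1 - Real.cos (x * t)) / t * Real.exp (-c * t))
      (x / (c ^ 2 + x ^ 2)) x := by
    rw [← integral_sin_mul_exp_neg hc]
    refine (hasDerivAt_integral_of_dominated_loc_of_deriv_le
      (F := fun x t => (1 - Real.cos (x * t)) / t * Real.exp (-c * t))
      (F' := fun x t => Real.sin (x * t) * Real.exp (-c * t))
      (bound := fun t => Real.exp (-c * t)) univ_mem (Eventually.of_forall fun y => ?_)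
      (integrableOn_one_sub_cos_div_mul (integrableOn_exp_neg_mul hc) x) ?_ ?_
      (integrableOn_exp_neg_mul hc) ?_).2
    · exact Measurable.aestronglyMeasurable (by fun_prop)
    · exact Measurable.aestronglyMeasurable (by fun_prop)
    · refine ae_of_all _ fun t y _ => ?_
      rw [norm_mul, Real.norm_of_nonneg (Real.exp_pos _).le]
      exact mul_le_of_le_one_left (Real.exp_pos _).le (Real.abs_sin_le_one _)
    · filter_upwards [ae_restrict_mem measurableSet_Ioi] with t ht y _
      have ht0 : t ≠ 0 := ne_of_gt ht
      have h1 : HasDerivAt (fun y => y * t) t y := by simpa using (hasDerivAt_id y).mul_const t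
      convert! (((h1.cos.const_sub 1).div_const t).mul_const (Real.exp (-c * t))) using 1
      field_simp
  have hG (x : ℝ) : HasDerivAt (fun x => Real.log (1 + x ^ 2 / c ^ 2) / 2)
      (x / (c ^ 2 + x ^ 2)) x := by
    have hpos : 1 + x ^ 2 / c ^ 2 ≠ 0 := by positivity
    convert! (((((hasDerivAt_id x).pow 2).div_const (c ^ 2)).const_add 1).log hpos).div_const 2
      using 1
    simp
    field_simp
  have hconst := is_const_of_deriv_eq_zero (fun y => ((hF y).sub (hG y)).differentiableAt)
    (fun y => by rw [((hF y).sub (hG y)).deriv, sub_self]) x 0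
  simpa [sub_eq_zero] using hconst

end Frullani

section EulerProduct

/-- The partial Euler products of `sinh x / x`, rescaled by `a`. -/
noncomputable def sinhProd (a : ℝ) (n : ℕ) (x : ℝ) : ℝ :=
  ∏ j ∈ Finset.range n, (1 + x ^ 2 / (Real.pi * (j + 1) / a) ^ 2)

/-- The density whose Lévy integral is `log (sinhProd a n x) / 2`. -/
noncomputable def expSum (a : ℝ) (n : ℕ) (t : ℝ) : ℝ :=
  ∑ j ∈ Finset.range n, Real.exp (-(Real.pi * (j + 1) / a) * t)

variable {a : ℝ}

theorem tendsto_sinhProd (ha : 0 < a) {x : ℝ} (hx : x ≠ 0) :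
    Tendsto (fun n => sinhProd a n x) atTop (𝓝 (Real.sinh (a * x) / (a * x))) := by
  have hpi : (Real.pi : ℂ) ≠ 0 := by exact_mod_cast Real.pi_ne_zero
  have h := Complex.tendsto_euler_sin_prod ((a * x / Real.pi : ℝ) * Complex.I)
  have hlim : Tendsto (fun n => a * x * sinhProd a n x) atTop (𝓝 (Real.sinh (a * x))) := by
    have h' := (Complex.continuous_im.tendsto _).comp h
    have harg : (Real.pi : ℂ) * ((a * x / Real.pi : ℝ) * Complex.I) =
        ((a * x : ℝ) : ℂ) * Complex.I := by
      push_cast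
      field_simp
    rw [harg, Complex.sin_mul_I, ← Complex.ofReal_sinh, Complex.im_ofReal_mul, Complex.I_im,
      mul_one] at h'
    refine h'.congr fun n => ?_
    have hprod : ∏ j ∈ Finset.range n, ((1 : ℂ) - ((a * x / Real.pi : ℝ) * Complex.I) ^ 2 /
        ((j : ℂ) + 1) ^ 2) = (sinhProd a n x : ℂ) := by
      rw [sinhProd, Complex.ofReal_prod]
      refine Finset.prod_congr rfl fun j _ => ?_
      have hj : (j : ℂ) + 1 ≠ 0 := Nat.cast_add_one_ne_zero j
      have ha' : (a : ℂ) ≠ 0 := by exact_mod_cast ha.ne'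
      push_cast
      rw [mul_pow, Complex.I_sq]
      field_simp
      ring
    rw [Function.comp_apply, hprod, mul_right_comm, ← Complex.ofReal_mul,
      Complex.im_ofReal_mul, Complex.I_im, mul_one]
  have h2 := hlim.const_mul (a * x)⁻¹
  have hax : a * x ≠ 0 := mul_ne_zero ha.ne' hx
  rw [← div_eq_inv_mul] at h2
  exact h2.congr fun n => inv_mul_cancel_left₀ hax _

theorem sinhProd_pos (ha : 0 < a) (n : ℕ) (x : ℝ) : 0 < sinhProd a n x :=
  Finset.prod_pos fun j _ => by positivity

theorem integrableOn_expSum (ha : 0 < a) (n : ℕ) : IntegrableOn (expSum a n) (Ioi 0) :=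
  integrable_finsetSum _ fun j _ => integrableOn_exp_neg_mul (by positivity)

theorem integral_expSum (ha : 0 < a) (n : ℕ) (x : ℝ) :
    ∫ t in Ioi (0 : ℝ), (1 - Real.cos (x * t)) / t * expSum a n t =
      Real.log (sinhProd a n x) / 2 := by
  have hpos (j : ℕ) : 0 < Real.pi * (j + 1) / a := by positivity
  simp_rw [expSum, Finset.mul_sum]
  rw [integral_finsetSum _ fun j _ =>
    integrableOn_one_sub_cos_div_mul (integrableOn_exp_neg_mul (hpos j)) x]
  simp_rw [integral_one_sub_cos_div_mul_exp_neg (hpos _)]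
  rw [sinhProd, Real.log_prod fun j _ => by have := hpos j; positivity, Finset.sum_div]

end EulerProduct

section Density

theorem density_block_nonneg {q : ℝ} (hq : 0 ≤ q) :
    0 ≤ q ^ 8 - q ^ 9 - q ^ 12 + q ^ 16 + q ^ 18 - q ^ 27 + q ^ 32 + q ^ 40 - q ^ 45 + q ^ 54 +
      q ^ 56 - q ^ 60 - q ^ 63 + q ^ 64 := by
  have h : q ^ 8 - q ^ 9 - q ^ 12 + q ^ 16 + q ^ 18 - q ^ 27 + q ^ 32 + q ^ 40 - q ^ 45 + q ^ 54 +
      q ^ 56 - q ^ 60 - q ^ 63 + q ^ 64 = q ^ 8 * (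
      2 * ((1 - q) ^ 2) ^ 0 * q ^ 28 + 138 * ((1 - q) ^ 2) ^ 1 * q ^ 27 +
        831 * ((1 - q) ^ 2) ^ 2 * q ^ 26 + 2227 * ((1 - q) ^ 2) ^ 3 * q ^ 25 +
        1084459 * ((1 - q) ^ 2) ^ 4 * q ^ 24 + 22075196 * ((1 - q) ^ 2) ^ 5 * q ^ 23 +
        203085728 * ((1 - q) ^ 2) ^ 6 * q ^ 22 + 1126679521 * ((1 - q) ^ 2) ^ 7 * q ^ 21 +
        4253104437 * ((1 - q) ^ 2) ^ 8 * q ^ 20 + 11680439829 * ((1 - q) ^ 2) ^ 9 * q ^ 19 +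
        24349042575 * ((1 - q) ^ 2) ^ 10 * q ^ 18 + 39660176730 * ((1 - q) ^ 2) ^ 11 * q ^ 17 +
        51527504355 * ((1 - q) ^ 2) ^ 12 * q ^ 16 + 54206046000 * ((1 - q) ^ 2) ^ 13 * q ^ 15 +
        46677860919 * ((1 - q) ^ 2) ^ 14 * q ^ 14 + 33156944536 * ((1 - q) ^ 2) ^ 15 * q ^ 13 +
        19527020062 * ((1 - q) ^ 2) ^ 16 * q ^ 12 + 9560362031 * ((1 - q) ^ 2) ^ 17 * q ^ 11 +
        3893123351 * ((1 - q) ^ 2) ^ 18 * q ^ 10 + 1316195037 * ((1 - q) ^ 2) ^ 19 * q ^ 9 +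
        367834084 * ((1 - q) ^ 2) ^ 20 * q ^ 8 + 84351509 * ((1 - q) ^ 2) ^ 21 * q ^ 7 +
        15695040 * ((1 - q) ^ 2) ^ 22 * q ^ 6 + 2330588 * ((1 - q) ^ 2) ^ 23 * q ^ 5 +
        269499 * ((1 - q) ^ 2) ^ 24 * q ^ 4 + 23375 * ((1 - q) ^ 2) ^ 25 * q ^ 3 +
        1430 * ((1 - q) ^ 2) ^ 26 * q ^ 2 + 55 * ((1 - q) ^ 2) ^ 27 * q ^ 1 +
        1 * ((1 - q) ^ 2) ^ 28 * q ^ 0) := by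
    ring
  rw [h]
  positivity

theorem density_nonneg {q : ℝ} (hq : 0 ≤ q) (M : ℕ) :
    0 ≤ ∑ j ∈ Finset.range (9 * M), q ^ (8 * (j + 1)) +
      2 * ∑ j ∈ Finset.range (4 * M), q ^ (18 * (j + 1)) -
      ∑ j ∈ Finset.range (8 * M), q ^ (9 * (j + 1)) -
      ∑ j ∈ Finset.range (6 * M), q ^ (12 * (j + 1)) -
      ∑ j ∈ Finset.range (1 * M), q ^ (72 * (j + 1)) := by
  induction M with
  | zero => simp
  | succ M ih =>
    have := add_nonneg ih (mul_nonneg (pow_nonneg hq (72 * M)) (density_block_nonneg hq))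
    refine this.trans_eq ?_
    simp only [Nat.mul_succ, Finset.sum_range_succ]
    ring

theorem expSum_eq_sum_pow (a k n : ℕ) (hak : a * k = 72) (t : ℝ) :
    expSum a n t = ∑ j ∈ Finset.range n, Real.exp (-(Real.pi / 72) * t) ^ (k * (j + 1)) := by
  refine Finset.sum_congr rfl fun j _ => ?_
  have ha : (a : ℝ) ≠ 0 := by
    rintro h
    simp_all
  have hak' : (a : ℝ) * k = 72 := by exact_mod_cast hak
  rw [← Real.exp_nat_mul, ← hak']
  have hk : (k : ℝ) ≠ 0 := by
    rintro h
    simp_all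
  congr 1
  push_cast
  field_simp

/-- The density of the Lévy integral of the `M`-th Euler product approximation of
`sinh (8 * x) * sinh (6 * x) * sinh x / (sinh (9 * x) * sinh (4 * x) ^ 2)`. -/
noncomputable def levyDensity (M : ℕ) (t : ℝ) : ℝ :=
  expSum 9 (9 * M) t + 2 * expSum 4 (4 * M) t - expSum 8 (8 * M) t - expSum 6 (6 * M) t -
    expSum 1 (1 * M) t

theorem levyDensity_nonneg (M : ℕ) (t : ℝ) : 0 ≤ levyDensity M t := by
  have h := density_nonneg (Real.exp_pos (-(Real.pi / 72) * t)).le M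
  rw [← expSum_eq_sum_pow 9 8 _ rfl, ← expSum_eq_sum_pow 4 18 _ rfl,
    ← expSum_eq_sum_pow 8 9 _ rfl, ← expSum_eq_sum_pow 6 12 _ rfl,
    ← expSum_eq_sum_pow 1 72 _ rfl] at h
  simpa [levyDensity] using h

theorem integrableOn_levyDensity (M : ℕ) : IntegrableOn (levyDensity M) (Ioi 0) :=
  ((((integrableOn_expSum (by norm_num) _).add
    ((integrableOn_expSum (by norm_num) _).const_mul 2)).sub
    (integrableOn_expSum (by norm_num) _)).sub
    (integrableOn_expSum (by norm_num) _)).sub (integrableOn_expSum (by norm_num) _)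

theorem exp_neg_integral_levyDensity (M : ℕ) (x : ℝ) :
    Real.exp (-(2 * ∫ t in Ioi (0 : ℝ), (1 - Real.cos (x * t)) / t * levyDensity M t)) =
      sinhProd 8 (8 * M) x * sinhProd 6 (6 * M) x * sinhProd 1 (1 * M) x /
        (sinhProd 9 (9 * M) x * sinhProd 4 (4 * M) x * sinhProd 4 (4 * M) x) := by
  have hint {a : ℝ} (ha : 0 < a) (n : ℕ) :=
    integrableOn_one_sub_cos_div_mul (integrableOn_expSum ha n) x
  have h9 := hint (a := 9) (by norm_num) (9 * M)
  have h4 := (hint (a := 4) (by norm_num) (4 * M)).const_mul 2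
  have h8 := hint (a := 8) (by norm_num) (8 * M)
  have h6 := hint (a := 6) (by norm_num) (6 * M)
  have h1 := hint (a := 1) (by norm_num) (1 * M)
  have hsplit : ∫ t in Ioi (0 : ℝ), (1 - Real.cos (x * t)) / t * levyDensity M t =
      Real.log (sinhProd 9 (9 * M) x) / 2 + 2 * (Real.log (sinhProd 4 (4 * M) x) / 2) -
        Real.log (sinhProd 8 (8 * M) x) / 2 - Real.log (sinhProd 6 (6 * M) x) / 2 -
        Real.log (sinhProd 1 (1 * M) x) / 2 := by
    rw [← integral_expSum (by norm_num), ← integral_expSum (by norm_num),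
      ← integral_expSum (by norm_num), ← integral_expSum (by norm_num),
      ← integral_expSum (by norm_num), ← integral_const_mul, ← integral_add' h9 h4,
      ← integral_sub' (h9.add h4) h8, ← integral_sub' ((h9.add h4).sub h8) h6,
      ← integral_sub' (((h9.add h4).sub h8).sub h6) h1]
    refine integral_congr_ae (ae_of_all _ fun t => ?_)
    simp only [levyDensity, Pi.add_apply, Pi.sub_apply]
    ring
  have p9 := sinhProd_pos (a := 9) (by norm_num) (9 * M) x
  have p4 := sinhProd_pos (a := 4) (by norm_num) (4 * M) x
  have p8 := sinhProd_pos (a := 8) (by norm_num) (8 * M) x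
  have p6 := sinhProd_pos (a := 6) (by norm_num) (6 * M) x
  have p1 := sinhProd_pos (a := 1) (by norm_num) (1 * M) x
  rw [hsplit, ← Real.exp_log (show 0 < sinhProd 8 (8 * M) x * sinhProd 6 (6 * M) x *
    sinhProd 1 (1 * M) x / (sinhProd 9 (9 * M) x * sinhProd 4 (4 * M) x * sinhProd 4 (4 * M) x)
    by positivity), Real.log_div (by positivity) (by positivity),
    Real.log_mul (by positivity) p1.ne', Real.log_mul p8.ne' p6.ne',
    Real.log_mul (by positivity) p4.ne', Real.log_mul p9.ne' p4.ne']
  congr 1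
  ring

end Density

theorem sinh_861_944_infdiv (f : ℝ → ℝ)
    (hf : ∀ x : ℝ, x ≠ 0 → f x =
      Real.sinh (8 * x) * Real.sinh (6 * x) * Real.sinh x /
        (Real.sinh (9 * x) * Real.sinh (4 * x) * Real.sinh (4 * x)))
    (hf0 : f 0 = 1 / 3) :
    IsInfDivFun f := by
  have hlim (x : ℝ) : Tendsto (fun M : ℕ => 1 / 3 * Real.exp (-(2 *
      ∫ t in Ioi (0 : ℝ), (1 - Real.cos (x * t)) / t * levyDensity M t))) atTop (𝓝 (f x)) := by
    rcases eq_or_ne x 0 with rfl | hx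
    · simp [hf0]
    · simp_rw [exp_neg_integral_levyDensity]
      have ht {a : ℝ} (ha : 0 < a) {k : ℕ} (hk : 0 < k) :=
        (tendsto_sinhProd ha hx).comp (tendsto_id.const_mul_atTop' hk)
      have hs {a : ℝ} (ha : 0 < a) : Real.sinh (a * x) ≠ 0 := by
        simp [ha.ne', hx]
      have h9 := hs (a := 9) (by norm_num)
      have h4 := hs (a := 4) (by norm_num)
      have h := ((((ht (a := 8) (by norm_num) (k := 8) (by norm_num)).mul
        (ht (a := 6) (by norm_num) (k := 6) (by norm_num))).mul
        (ht (a := 1) (by norm_num) (k := 1) (by norm_num))).div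
        (((ht (a := 9) (by norm_num) (k := 9) (by norm_num)).mul
        (ht (a := 4) (by norm_num) (k := 4) (by norm_num))).mul
        (ht (a := 4) (by norm_num) (k := 4) (by norm_num))) (by positivity)).const_mul (1 / 3)
      convert! h using 2
      rw [hf x hx, one_mul]
      field_simp
      norm_num
  have hfpos (x : ℝ) : f x ≠ 0 := by
    rcases eq_or_ne x 0 with rfl | hx
    · simp [hf0]
    · simp [hf x hx, hx]
  intro r hr
  refine IsRealPosDef.isPosDefFun (φ := fun x => f x ^ r) ?_
  refine .of_tendsto (fun M => ?_) fun x => (hlim x).rpow_const (.inl (hfpos x))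
  have hpd := (IsRealPosDef.const (show (0 : ℝ) ≤ (1 / 3) ^ r by positivity)).mul
    (isRealPosDef_exp_neg_integral (w := fun t => 2 * r * levyDensity M t)
      (fun t _ => mul_nonneg (by positivity) (levyDensity_nonneg M t))
      ((integrableOn_levyDensity M).const_mul _))
  convert! hpd using 2 with x
  rw [Real.mul_rpow (by positivity) (Real.exp_pos _).le, ← Real.exp_mul]
  simp_rw [mul_left_comm _ (2 * r), integral_const_mul]
  congr 2
  ring
end
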